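/- Let G be a subgroup of Thompson's group V that is swap-primitive. Then G = V. -/

import Mathlib

/-!
Call a pair of incomparable addresses `a, b` *hereditary* (`Her`) when `G` contains `(au bu)` for
all words `u`, and not just `(a b)` (`Tr`). Everything rests on conjugation inside `G`:
conjugating `(a b)` by an element acting on the two cones as `a ↦ a'`, `b ↦ b'` gives `(a' b')`.

A hereditary pair exists. Take a small transposition `(a b)` in `G` with `a` the one-letter
word `0`. A chain starting at an address disjoint from both `a` and `b` and ending at `a` has a
first link that meets one of these cones, and conjugation then yields three pairwise
incomparable addresses, each two of which are swapped by `G` (`exists_triple`). A chain leaving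
the cone of one member of such a triple shows that some pair of the triple is hereditary
(`her_of_triple`, `exists_her`).

Small transpositions of `G` are hereditary. Relate two points `aw` and `bw` when `a, b` is
hereditary (`E`); up to reflexivity this is an equivalence relation, and no class is a singleton
since `G` moves hereditary pairs everywhere (`exists_e`). If `(c c')` lies in `G` and `cw` is
related to a point outside both cones, conjugation by `(c c')` moves only one end of the local
swap of the two points, whence `cz, c'z` is hereditary for some prefix `z` of `w` (`gm_of_e`).
Consequently the property of a cone to miss or to contain a given class propagates along chains,
and all classes are dense (`dense`). So every point of the cone of `c` is related to a point
outside both cones when `(c c')` is small, and König's lemma makes `c, c'` hereditary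
(`her_of_tr`).

All transpositions lie in `G`. For incomparable `a, b` and a point `w`, local swaps are composed
along a chain from `a` to `b`; a further point related to `aw` and different from all points
met on the way, which exists by density, avoids degenerate compositions. König's lemma again
gives `(a b)` (`tr_of_incomp`). Finally the transpositions generate `V`, by induction on the
size of a partition: transpositions are used to map a pair of sibling cones to a pair of
sibling cones, and both pairs are merged (`mem_of_part`).
-/

/-- Addresses: finite words over the alphabet `{0,1}` (`Bool`). -/
abbrev Addr : Type := List Bool

/-- Cantor space: infinite words over the alphabet `{0,1}`. -/
abbrev Cantor : Type := ℕ → Bool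

/-- Prepend the finite word `α` to the infinite word `w`. -/
def wcat (α : Addr) (w : Cantor) : Cantor := fun n =>
  if h : n < α.length then α.get ⟨n, h⟩ else w (n - α.length)

/-- The cone of the address `α`: the set of infinite words having `α` as a prefix. -/
def cone (α : Addr) : Set Cantor := Set.range (wcat α)

/-- `g` is a prefix substitution map: there are partitions of Cantor space into cones
`(A i)𝔠` and `(B i)𝔠` such that `g` maps `(A i) w` to `(B i) w`. -/
def IsPrefixSubst (g : Equiv.Perm Cantor) : Prop :=
  ∃ (n : ℕ) (A B : Fin n → Addr),
    (∀ i j, i ≠ j → Disjoint (cone (A i)) (cone (A j))) ∧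
    (⋃ i, cone (A i)) = Set.univ ∧
    (∀ i j, i ≠ j → Disjoint (cone (B i)) (cone (B j))) ∧
    (⋃ i, cone (B i)) = Set.univ ∧
    (∀ i w, g (wcat (A i) w) = wcat (B i) w)

/-- Thompson's group `V`, as the set of prefix substitution maps inside `Equiv.Perm Cantor`. -/
def VSet : Set (Equiv.Perm Cantor) := { g | IsPrefixSubst g }

/-- `α ^ g = β` : `g` maps the cone of `α` onto the cone of `β` by the prefix
substitution `α ↦ β`. -/
def actsOn (g : Equiv.Perm Cantor) (α β : Addr) : Prop :=
  ∀ w, g (wcat α w) = wcat β w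

/-- A subset of `Equiv.Perm Cantor` that is closed under the group operations. -/
def IsSubgroupSet (M : Set (Equiv.Perm Cantor)) : Prop :=
  (1 : Equiv.Perm Cantor) ∈ M ∧ (∀ g ∈ M, ∀ h ∈ M, g * h ∈ M) ∧ ∀ g ∈ M, g⁻¹ ∈ M

/-- `M` is a maximal subgroup of Thompson's group `V`. -/
def IsMaximalSubgroupOfV (M : Set (Equiv.Perm Cantor)) : Prop :=
  IsSubgroupSet M ∧ M ⊆ VSet ∧ M ≠ VSet ∧
    ∀ H : Set (Equiv.Perm Cantor),
      IsSubgroupSet H → M ⊆ H → H ⊆ VSet → H = M ∨ H = VSet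

/-- The addresses `α` and `β` are incomparable: their cones are disjoint. -/
def Incomp (α β : Addr) : Prop := Disjoint (cone α) (cone β)

/-- The pair of addresses `α, β` has small support: their cones do not cover Cantor
space. -/
def SmallPair (α β : Addr) : Prop := cone α ∪ cone β ≠ Set.univ

/-- `g` is the transposition `(α β)`: it swaps the cones of `α` and `β` by prefix
substitutions and fixes everything else. -/
def IsTranspositionOf (g : Equiv.Perm Cantor) (α β : Addr) : Prop :=
  (∀ w, g (wcat α w) = wcat β w) ∧ (∀ w, g (wcat β w) = wcat α w) ∧
    ∀ x, x ∉ cone α → x ∉ cone β → g x = x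

/-- A `G`-chain connecting `a` to `b`: consecutive links are swapped by small
transpositions belonging to `G`. -/
def GChain (G : Set (Equiv.Perm Cantor)) (a b : Addr) : Prop :=
  ∃ (n : ℕ) (c : ℕ → Addr), c 0 = a ∧ c n = b ∧
    ∀ i, i < n → Incomp (c i) (c (i + 1)) ∧ SmallPair (c i) (c (i + 1)) ∧
      ∃ g ∈ G, IsTranspositionOf g (c i) (c (i + 1))

/-- `G` is swap-primitive: every pair of nonempty addresses is connected by a
`G`-chain. -/
def SwapPrimitive (G : Set (Equiv.Perm Cantor)) : Prop :=
  ∀ a b : Addr, a ≠ [] → b ≠ [] → GChain G a b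


/-! ### Words, cones and prefixes -/

lemma wcat_lt {a : Addr} {w : Cantor} {i : ℕ} (h : i < a.length) : wcat a w i = a[i] := by
  simp [wcat, h]

lemma wcat_add (a : Addr) (w : Cantor) (i : ℕ) : wcat a w (a.length + i) = w i := by
  simp [wcat]

@[simp] lemma wcat_nil (w : Cantor) : wcat [] w = w := by
  funext i; simp [wcat]

@[simp] lemma wcat_append (a b : Addr) (w : Cantor) :
    wcat (a ++ b) w = wcat a (wcat b w) := by
  funext i
  rcases lt_or_ge i a.length with h | h
  · rw [wcat_lt h, wcat_lt (by simp; omega)]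
    simp [h]
  · obtain ⟨j, rfl⟩ := Nat.exists_eq_add_of_le h
    rw [wcat_add]
    rcases lt_or_ge j b.length with h | h
    · rw [wcat_lt h, wcat_lt (by simp; omega)]
      simp
    · obtain ⟨k, rfl⟩ := Nat.exists_eq_add_of_le h
      rw [wcat_add]
      have := wcat_add (a ++ b) w k
      rwa [List.length_append, add_assoc] at this

lemma wcat_inj (a : Addr) {v w : Cantor} (h : wcat a v = wcat a w) : v = w := by
  funext i
  rw [← wcat_add a v, ← wcat_add a w, h]

lemma wcat_mem (a : Addr) (w : Cantor) : wcat a w ∈ cone a := ⟨w, rfl⟩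

lemma wcat_append_mem (a b : Addr) (w : Cantor) : wcat a (wcat b w) ∈ cone (a ++ b) :=
  ⟨w, wcat_append a b w⟩

lemma cone_append (a u : Addr) : cone (a ++ u) ⊆ cone a := by
  rintro _ ⟨w, rfl⟩
  rw [wcat_append]
  exact wcat_mem _ _

lemma cone_nil : cone [] = Set.univ := by
  ext x; simp [cone]

/-- The prefix of length `n` of an infinite word. -/
def pre (w : Cantor) (n : ℕ) : Addr := (List.range n).map w

/-- The infinite word obtained by deleting the first `n` letters. -/
def drp (w : Cantor) (n : ℕ) : Cantor := fun i => w (n + i)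

@[simp] lemma pre_length (w : Cantor) (n : ℕ) : (pre w n).length = n := by simp [pre]

lemma pre_zero (w : Cantor) : pre w 0 = [] := by simp [pre]

lemma pre_succ (w : Cantor) (n : ℕ) : pre w (n + 1) = pre w n ++ [w n] := by
  simp [pre, List.range_succ]

@[simp] lemma wcat_pre (w : Cantor) (n : ℕ) : wcat (pre w n) (drp w n) = w := by
  funext i
  rcases lt_or_ge i n with h | h
  · rw [wcat_lt (by simpa using h)]; simp [pre]
  · obtain ⟨j, rfl⟩ := Nat.exists_eq_add_of_le h
    have := wcat_add (pre w n) (drp w n) j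
    rw [pre_length] at this
    rw [this]; rfl

lemma mem_cone_pre (w : Cantor) (n : ℕ) : w ∈ cone (pre w n) := ⟨_, wcat_pre w n⟩

lemma pre_add (w : Cantor) (m k : ℕ) : pre w (m + k) = pre w m ++ pre (drp w m) k := by
  simp [pre, List.range_add, drp, Function.comp_def]

lemma pre_wcat (u : Addr) (w : Cantor) (k : ℕ) :
    pre (wcat u w) (u.length + k) = u ++ pre w k := by
  apply List.ext_getElem
  · simp
  · intro i h1 h2
    simp only [pre, List.getElem_map, List.getElem_range]
    rcases lt_or_ge i u.length with h | h
    · rw [wcat_lt h]; simp [h]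
    · obtain ⟨j, rfl⟩ := Nat.exists_eq_add_of_le h
      rw [wcat_add]; simp

lemma eq_pre_of_mem {a : Addr} {x : Cantor} (h : x ∈ cone a) : a = pre x a.length := by
  obtain ⟨w, rfl⟩ := h
  simpa [pre_zero] using (pre_wcat a w 0).symm

/-- Of two addresses whose cones share a point, the shorter is a prefix of the longer. -/
lemma ext_of_mem {a b : Addr} {x : Cantor} (ha : x ∈ cone a) (hb : x ∈ cone b)
    (h : a.length ≤ b.length) : ∃ t, b = a ++ t := by
  obtain ⟨k, hk⟩ := Nat.exists_eq_add_of_le h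
  rw [eq_pre_of_mem hb, hk, pre_add, ← eq_pre_of_mem ha]
  exact ⟨_, rfl⟩

lemma comparable_of_not_incomp {a b : Addr} (h : ¬ Incomp a b) :
    (∃ t, b = a ++ t) ∨ ∃ t, a = b ++ t := by
  obtain ⟨x, ha, hb⟩ := Set.not_disjoint_iff.1 h
  rcases le_total a.length b.length with h | h
  · exact Or.inl (ext_of_mem ha hb h)
  · exact Or.inr (ext_of_mem hb ha h)

lemma Incomp.sym {a b : Addr} (h : Incomp a b) : Incomp b a := Disjoint.symm h

lemma Incomp.left {a b : Addr} (h : Incomp a b) (u : Addr) : Incomp (a ++ u) b :=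
  Set.disjoint_of_subset_left (cone_append a u) h

lemma Incomp.right {a b : Addr} (h : Incomp a b) (u : Addr) : Incomp a (b ++ u) :=
  Set.disjoint_of_subset_right (cone_append b u) h

lemma Incomp.both {a b : Addr} (h : Incomp a b) (u v : Addr) : Incomp (a ++ u) (b ++ v) :=
  (h.left u).right v

lemma Incomp.ne_wcat {a b : Addr} (h : Incomp a b) (v w : Cantor) : wcat a v ≠ wcat b w :=
  fun e => Set.disjoint_left.1 h (wcat_mem a v) (e ▸ wcat_mem b w)

lemma not_incomp_append (a u : Addr) : ¬ Incomp a (a ++ u) := fun h =>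
  Set.disjoint_left.1 h (cone_append a u (wcat_mem _ fun _ => false)) (wcat_mem _ _)

lemma Incomp.ne_nil {a b : Addr} (h : Incomp a b) : a ≠ [] := by
  rintro rfl
  exact not_incomp_append [] b h

lemma incomp_append {a u v : Addr} (h : Incomp u v) : Incomp (a ++ u) (a ++ v) := by
  rw [Incomp, Set.disjoint_left]
  rintro _ ⟨x, rfl⟩ ⟨y, hy⟩
  rw [wcat_append, wcat_append] at hy
  exact h.ne_wcat x y (wcat_inj _ hy).symm

lemma incomp_ft : Incomp [false] [true] := by
  rw [Incomp, Set.disjoint_left]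
  rintro _ ⟨x, rfl⟩ ⟨y, hy⟩
  have := congrFun hy 0
  simp [wcat] at this

lemma mem_child {a : Addr} {x : Cantor} (h : x ∈ cone a) :
    x ∈ cone (a ++ [false]) ∨ x ∈ cone (a ++ [true]) := by
  obtain ⟨w, rfl⟩ := h
  have h1 : w = wcat [w 0] (drp w 1) := by
    conv_lhs => rw [← wcat_pre w 1]
    rfl
  rw [h1]
  cases w 0
  · exact Or.inl (wcat_append_mem _ _ _)
  · exact Or.inr (wcat_append_mem _ _ _)

/-- Distinct points with a common tail `w` are separated by appending a long prefix of `w`. -/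
lemma exists_incomp_of_ne {a b : Addr} {w : Cantor} (h : wcat a w ≠ wcat b w) :
    ∃ n, Incomp (a ++ pre w n) (b ++ pre w n) := by
  obtain ⟨i, hi⟩ := Function.ne_iff.1 h
  have key : ∀ (c : Addr) (v : Cantor), wcat (c ++ pre w (i + 1)) v i = wcat c w i := by
    intro c v
    conv_rhs => rw [← wcat_pre w (i + 1), ← wcat_append]
    rw [wcat_lt (by simp; omega), wcat_lt (by simp; omega)]
  refine ⟨i + 1, Set.disjoint_left.2 ?_⟩
  rintro _ ⟨x, rfl⟩ ⟨y, hy⟩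
  have := congrFun hy i
  rw [key, key] at this
  exact hi this.symm

lemma incomp_of_not_mem {a c : Addr} {w : Cantor} (h : wcat a w ∉ cone c)
    (hl : c.length ≤ a.length) : Incomp a c := by
  by_contra hc
  obtain ⟨x, ha, hc⟩ := Set.not_disjoint_iff.1 hc
  obtain ⟨t, rfl⟩ := ext_of_mem hc ha hl
  exact h (cone_append c t (wcat_mem _ _))

lemma exists_sep {x y : Cantor} (h : x ≠ y) : ∃ n, y ∉ cone (pre x n) := by
  obtain ⟨i, hi⟩ := Function.ne_iff.1 h
  refine ⟨i + 1, fun hm => hi ?_⟩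
  have := eq_pre_of_mem hm
  rw [pre_length, pre_succ, pre_succ] at this
  simpa using (List.append_inj' this rfl).2

/-- König's lemma for the binary tree: a property of addresses that passes from both children
to the parent and holds somewhere along every branch holds at the root. -/
lemma konig {P : Addr → Prop} (h : ∀ z, P (z ++ [false]) → P (z ++ [true]) → P z)
    (hw : ∀ w : Cantor, ∃ n, P (pre w n)) : P [] := by
  classical
  by_contra h0
  let f : Addr → Bool := fun z => decide (P (z ++ [false]))
  let s : ℕ → Addr := fun n => Nat.rec [] (fun _ z => z ++ [f z]) n
  have hs : ∀ n, pre (fun n => f (s n)) n = s n := by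
    intro n
    induction n with
    | zero => simp [pre_zero, s]
    | succ n ih => rw [pre_succ, ih]
  have hbad : ∀ n, ¬ P (s n) := by
    intro n
    induction n with
    | zero => exact h0
    | succ n ih =>
      change ¬ P (s n ++ [f (s n)])
      by_cases hp : P (s n ++ [false])
      · have : f (s n) = true := by simp [f, hp]
        rw [this]
        exact fun ht => ih (h _ hp ht)
      · have : f (s n) = false := by simp [f, hp]
        rwa [this]
  obtain ⟨n, hn⟩ := hw (fun n => f (s n))
  rw [hs] at hn
  exact hbad n hn

/-! ### Transpositions contained in the group -/

lemma actsOn.append {g : Equiv.Perm Cantor} {a b : Addr} (h : actsOn g a b) (u : Addr) :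
    actsOn g (a ++ u) (b ++ u) := by
  intro w
  rw [wcat_append, wcat_append, h]

lemma Incomp.map {g : Equiv.Perm Cantor} {a b a' b' : Addr} (h : Incomp a b)
    (ha : actsOn g a a') (hb : actsOn g b b') : Incomp a' b' := by
  rw [Incomp, Set.disjoint_left]
  rintro _ ⟨x, rfl⟩ ⟨y, hy⟩
  rw [← ha, ← hb] at hy
  exact h.ne_wcat x y (g.injective hy).symm

/-- `a` and `b` are incomparable and the transposition `(a b)` belongs to `G`. -/
def Tr (G : Set (Equiv.Perm Cantor)) (a b : Addr) : Prop :=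
  Incomp a b ∧ ∃ g ∈ G, IsTranspositionOf g a b

/-- Hereditary version of `Tr`: all the transpositions `(au bu)` belong to `G`. -/
def Her (G : Set (Equiv.Perm Cantor)) (a b : Addr) : Prop := ∀ u, Tr G (a ++ u) (b ++ u)

section
variable {G : Set (Equiv.Perm Cantor)}

lemma IsTranspositionOf.fixes {g : Equiv.Perm Cantor} {a b d : Addr}
    (h : IsTranspositionOf g a b) (ha : Incomp d a) (hb : Incomp d b) : actsOn g d d :=
  fun w => h.2.2 _ (Set.disjoint_left.1 ha (wcat_mem d w)) (Set.disjoint_left.1 hb (wcat_mem d w))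

lemma Tr.sym {a b : Addr} (h : Tr G a b) : Tr G b a := by
  obtain ⟨h, g, hg, h1, h2, h3⟩ := h
  exact ⟨h.sym, g, hg, h2, h1, fun x hx hy => h3 x hy hx⟩

lemma Tr.conj (hG : IsSubgroupSet G) {a b a' b' : Addr} (h : Tr G a b) {k : Equiv.Perm Cantor}
    (hk : k ∈ G) (ha : actsOn k a a') (hb : actsOn k b b') : Tr G a' b' := by
  obtain ⟨h, g, hg, h1, h2, h3⟩ := h
  have inv : ∀ {c c' : Addr}, actsOn k c c' → ∀ w, k⁻¹ (wcat c' w) = wcat c w := by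
    intro c c' hc w
    rw [← hc w]; simp
  refine ⟨h.map ha hb, k * g * k⁻¹, hG.2.1 _ (hG.2.1 _ hk _ hg) _ (hG.2.2 _ hk), ?_, ?_, ?_⟩
  · intro w
    simp only [Equiv.Perm.mul_apply]
    rw [inv ha, h1, hb]
  · intro w
    simp only [Equiv.Perm.mul_apply]
    rw [inv hb, h2, ha]
  · intro x hx hy
    simp only [Equiv.Perm.mul_apply]
    rw [h3]
    · simp
    · rintro ⟨w, hw⟩
      exact hx ⟨w, by rw [← ha, hw]; simp⟩
    · rintro ⟨w, hw⟩
      exact hy ⟨w, by rw [← hb, hw]; simp⟩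

/-- Conjugating `(d cu)` by `(c c')`, for `d` disjoint from both cones. -/
lemma Tr.move (hG : IsSubgroupSet G) {c c' d u : Addr} (h : Tr G d (c ++ u)) (hc : Tr G c c')
    (h1 : Incomp d c) (h2 : Incomp d c') : Tr G d (c' ++ u) := by
  obtain ⟨_, k, hk, ht⟩ := hc
  exact h.conj hG hk (ht.fixes h1 h2) (actsOn.append ht.1 u)

lemma Tr.trans (hG : IsSubgroupSet G) {a b c : Addr} (h : Tr G a b) (h' : Tr G b c)
    (hac : Incomp a c) : Tr G a c := by
  have := Tr.move (u := []) hG (by simpa using h) h' h.1 hac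
  simpa using this

/-- Conjugating `(cu cv)` by `(c c')`. -/
lemma Tr.shift (hG : IsSubgroupSet G) {c c' u v : Addr} (h : Tr G (c ++ u) (c ++ v))
    (hc : Tr G c c') : Tr G (c' ++ u) (c' ++ v) := by
  obtain ⟨_, k, hk, ht⟩ := hc
  exact h.conj hG hk (actsOn.append ht.1 u) (actsOn.append ht.1 v)

lemma Tr.merge (hG : IsSubgroupSet G) {a b : Addr}
    (h0 : Tr G (a ++ [false]) (b ++ [false])) (h1 : Tr G (a ++ [true]) (b ++ [true]))
    (hab : Incomp a b) : Tr G a b := by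
  obtain ⟨_, g, hg, g1, g2, g3⟩ := h0
  obtain ⟨_, h, hh, k1, k2, k3⟩ := h1
  have hft (c d : Addr) (hcd : Incomp c d ∨ c = d) :
      Incomp (c ++ [false]) (d ++ [true]) := by
    rcases hcd with hcd | rfl
    · exact hcd.both _ _
    · exact incomp_append incomp_ft
  have hfix0 : actsOn h (a ++ [false]) (a ++ [false]) ∧ actsOn h (b ++ [false]) (b ++ [false]) :=
    ⟨IsTranspositionOf.fixes ⟨k1, k2, k3⟩ (hft _ _ (.inr rfl)) (hft _ _ (.inl hab)),
      IsTranspositionOf.fixes ⟨k1, k2, k3⟩ (hft _ _ (.inl hab.sym)) (hft _ _ (.inr rfl))⟩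
  have hfix1 : actsOn g (a ++ [true]) (a ++ [true]) ∧ actsOn g (b ++ [true]) (b ++ [true]) :=
    ⟨IsTranspositionOf.fixes ⟨g1, g2, g3⟩ (hft _ _ (.inr rfl)).sym (hft _ _ (.inl hab.sym)).sym,
      IsTranspositionOf.fixes ⟨g1, g2, g3⟩ (hft _ _ (.inl hab)).sym (hft _ _ (.inr rfl)).sym⟩
  have glue : ∀ {c d : Addr}, actsOn (g * h) (c ++ [false]) (d ++ [false]) →
      actsOn (g * h) (c ++ [true]) (d ++ [true]) → actsOn (g * h) c d := by
    intro c d hf ht w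
    have h1 : w = wcat [w 0] (drp w 1) := by
      conv_lhs => rw [← wcat_pre w 1]
      rfl
    rw [h1]
    cases w 0
    · simpa using hf (drp w 1)
    · simpa using ht (drp w 1)
  refine ⟨hab, g * h, hG.2.1 _ hg _ hh, glue ?_ ?_, glue ?_ ?_, ?_⟩
  · intro w; rw [Equiv.Perm.mul_apply, hfix0.1, g1]
  · intro w; rw [Equiv.Perm.mul_apply, k1, hfix1.2]
  · intro w; rw [Equiv.Perm.mul_apply, hfix0.2, g2]
  · intro w; rw [Equiv.Perm.mul_apply, k2, hfix1.1]
  · intro x hx hy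
    rw [Equiv.Perm.mul_apply, k3, g3] <;> intro hm
    · exact hx (cone_append _ _ hm)
    · exact hy (cone_append _ _ hm)
    · exact hx (cone_append _ _ hm)
    · exact hy (cone_append _ _ hm)

lemma Her.tr {a b : Addr} (h : Her G a b) : Tr G a b := by simpa using h []

lemma Her.append {a b : Addr} (h : Her G a b) (u : Addr) : Her G (a ++ u) (b ++ u) := by
  intro v
  simpa using h (u ++ v)

lemma Her.sym {a b : Addr} (h : Her G a b) : Her G b a := fun u => (h u).sym

lemma Her.conj (hG : IsSubgroupSet G) {a b a' b' : Addr} (h : Her G a b) {k : Equiv.Perm Cantor}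
    (hk : k ∈ G) (ha : actsOn k a a') (hb : actsOn k b b') : Her G a' b' :=
  fun u => (h u).conj hG hk (ha.append u) (hb.append u)

lemma Her.trans (hG : IsSubgroupSet G) {a b c : Addr} (h : Her G a b) (h' : Her G b c)
    (hac : Incomp a c) : Her G a c := fun u => (h u).trans hG (h' u) (hac.both u u)

/-- Induction along the links of a chain. -/
lemma GChain.induct {Q : Addr → Prop} {a b : Addr} (h : GChain G a b)
    (step : ∀ c c', Tr G c c' → SmallPair c c' → Q c → Q c') (ha : Q a) : Q b := by
  obtain ⟨n, c, rfl, rfl, hc⟩ := h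
  have : ∀ i, i ≤ n → Q (c i) := by
    intro i
    induction i with
    | zero => exact fun _ => ha
    | succ i ih =>
      intro hi
      obtain ⟨h1, h2, h3⟩ := hc i (by omega)
      exact step _ _ ⟨h1, h3⟩ h2 (ih (by omega))
  exact this n le_rfl

lemma exists_partner (hsp : SwapPrimitive G) {a : Addr} (ha : a ≠ []) :
    ∃ b, Tr G a b ∧ SmallPair a b := by
  by_contra! hno
  have : a ++ [false] = a := (hsp a (a ++ [false]) ha (by simp)).induct (Q := fun e => e = a)
    (fun c c' h hs e => by subst e; exact absurd hs (hno _ h)) rfl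
  simp at this

lemma exists_actsOn (hG : IsSubgroupSet G) (hsp : SwapPrimitive G) {a b : Addr} (ha : a ≠ [])
    (hb : b ≠ []) : ∃ g ∈ G, actsOn g a b := by
  refine (hsp a b ha hb).induct (Q := fun e => ∃ g ∈ G, actsOn g a e) ?_ ?_
  · rintro c c' ⟨_, k, hk, ht⟩ _ ⟨g, hg, hga⟩
    refine ⟨k * g, hG.2.1 _ hk _ hg, fun w => ?_⟩
    rw [Equiv.Perm.mul_apply, hga, ht.1]
  · exact ⟨1, hG.1, fun w => rfl⟩

/-! ### A hereditary pair exists -/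

/-- Three pairwise incomparable addresses are permuted by transpositions of `G`. -/
lemma exists_triple (hG : IsSubgroupSet G) (hsp : SwapPrimitive G) :
    ∃ a b c, Tr G a b ∧ Tr G b c ∧ Tr G a c := by
  -- The cone of the one-letter word `0` is not contained in a larger proper cone.
  set a : Addr := [false] with ha
  obtain ⟨b, hab, hsm⟩ := exists_partner hsp (a := a) (by simp [ha])
  have key : ∀ d v, Incomp d a → Incomp d b → Tr G d (a ++ v) →
      ∃ a b c, Tr G a b ∧ Tr G b c ∧ Tr G a c := by
    intro d v hda hdb h
    have h2 := h.move hG hab hda hdb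
    exact ⟨_, _, _, h.sym, h2, h.sym.trans hG h2 (hab.1.both _ _)⟩
  have key' : ∀ d v, Incomp d a → Incomp d b → Tr G d (b ++ v) →
      ∃ a b c, Tr G a b ∧ Tr G b c ∧ Tr G a c := fun d v hda hdb h =>
    key d v hda hdb (h.move hG hab.sym hdb hda)
  obtain ⟨x, hx⟩ := (Set.ne_univ_iff_exists_notMem _).1 hsm
  rw [Set.mem_union, not_or] at hx
  set N := a.length + b.length
  have hd : ∀ e : Addr, e.length ≤ N → x ∉ cone e → Incomp (pre x N) e := by
    intro e he hxe
    exact incomp_of_not_mem (w := drp x N) (by rwa [wcat_pre]) (by simpa using he)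
  have hda := hd a (by omega) hx.1
  have hdb := hd b (by omega) hx.2
  by_contra hno
  have := (hsp _ a hda.ne_nil hab.1.ne_nil).induct
    (Q := fun e => Incomp e a ∧ Incomp e b) ?_ ⟨hda, hdb⟩
  · exact not_incomp_append a [] (by simpa using this.1)
  rintro d p hdp - ⟨hd1, hd2⟩
  have hpa : Incomp p a := by
    by_contra hp
    rcases comparable_of_not_incomp hp with ⟨t, ht⟩ | ⟨t, rfl⟩
    · have hne := hdp.1.sym.ne_nil
      obtain ⟨y, p', rfl⟩ := List.exists_cons_of_ne_nil hne
      rw [ha, List.cons_append, List.cons.injEq] at ht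
      obtain ⟨rfl, ht⟩ := ht
      have : p' = [] := by simp_all
      subst this
      exact hno (key d [] hd1 hd2 (by simpa [ha] using hdp))
    · exact hno (key d t hd1 hd2 hdp)
  refine ⟨hpa, ?_⟩
  by_contra hp
  rcases comparable_of_not_incomp hp with ⟨t, rfl⟩ | ⟨t, rfl⟩
  · have h2 := hab.move hG hdp.sym hpa.sym hd1.sym
    exact hno ⟨_, _, _, hab.sym, h2, hab.sym.trans hG h2 (hdp.1.sym.both _ _)⟩
  · exact hno (key' d t hd1 hd2 hdp)

/-- If no address disjoint from `a` is a common prefix of `b` and `c`, the pair `a, b` of a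
triple is hereditary: a chain leaving the cone of `a` must do so through an address which is
disjoint from `a` and from one of `b`, `c`. -/
lemma her_of_triple (hG : IsSubgroupSet G) (hsp : SwapPrimitive G) {a b c : Addr}
    (hab : Tr G a b) (hbc : Tr G b c) (hac : Tr G a c)
    (hd : ∀ d s t, b = d ++ s → c = d ++ t → ¬ Incomp a d) : Her G a b := by
  intro u
  by_contra hu
  have hne : a ++ u ≠ [] := (hab.1.left u).ne_nil
  have := (hsp (a ++ u) b hne hab.sym.1.ne_nil).induct
    (Q := fun e => ∃ v, e = a ++ v ∧ ¬ Tr G (a ++ v) (b ++ v)) ?_ ⟨u, rfl, hu⟩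
  · obtain ⟨v, rfl, -⟩ := this
    exact not_incomp_append _ _ hab.1
  rintro _ d htr - ⟨v, rfl, hv⟩
  by_cases hda : ∃ v', d = a ++ v'
  · obtain ⟨v', rfl⟩ := hda
    refine ⟨v', rfl, fun hv' => hv ?_⟩
    have h1 : Tr G (a ++ v) (b ++ v') := htr.trans hG hv' (hab.1.both _ _)
    exact h1.trans hG (htr.shift hG hab).sym (hab.1.both _ _)
  · exfalso
    have had : Incomp a d := by
      by_contra h
      rcases comparable_of_not_incomp h with h | ⟨t, rfl⟩
      · exact hda h
      · rw [List.append_assoc] at htr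
        exact not_incomp_append _ _ htr.1.sym
    have key : ∀ {b}, Tr G a b → Incomp d b → Tr G (a ++ v) (b ++ v) := by
      intro b hab hdb
      exact htr.trans hG (htr.sym.move hG hab had.sym hdb) (hab.1.both _ _)
    by_cases hdb : Incomp d b
    · exact hv (key hab hdb)
    by_cases hdc : Incomp d c
    · exact hv ((key hac hdc).move hG hbc.sym (hac.1.left _) (hab.1.left _))
    rcases comparable_of_not_incomp hdb with ⟨s, hs⟩ | ⟨s, rfl⟩
    · rcases comparable_of_not_incomp hdc with ⟨t, ht⟩ | ⟨t, rfl⟩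
      · exact hd d s t hs ht had
      · exact hdb (hbc.1.sym.left _)
    · exact hdc (hbc.1.left _)

lemma exists_her (hG : IsSubgroupSet G) (hsp : SwapPrimitive G) : ∃ a b, Her G a b := by
  obtain ⟨a, b, c, hab, hbc, hac⟩ := exists_triple hG hsp
  by_cases h : ∀ d s t, b = d ++ s → c = d ++ t → ¬ Incomp a d
  · exact ⟨a, b, her_of_triple hG hsp hab hbc hac h⟩
  · push Not at h
    obtain ⟨d, s, t, rfl, rfl, had⟩ := h
    -- A prefix of `a` and of `c` is comparable with `d`, so it cannot be disjoint from `b`.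
    refine ⟨_, _, her_of_triple hG hsp hab.sym hac hbc ?_⟩
    rintro e p q rfl hq hi
    have h1 : ¬ Incomp e d := by
      intro hed
      have := (hed.left q).right t
      rw [← hq] at this
      exact not_incomp_append (d ++ t) [] (by simpa using this)
    rcases comparable_of_not_incomp h1 with ⟨r, rfl⟩ | ⟨r, rfl⟩
    · rw [List.append_assoc] at hi
      exact not_incomp_append _ _ hi.sym
    · rw [List.append_assoc] at had
      exact not_incomp_append _ _ had.sym

end

/-! ### Local swaps -/

section
variable {G : Set (Equiv.Perm Cantor)}

/-- `E x y` says that some hereditary pair `a, b` of addresses has `x = aw` and `y = bw`, so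
that arbitrarily small neighbourhoods of `x` and `y` are swapped by transpositions in `G`. -/
def E (G : Set (Equiv.Perm Cantor)) (x y : Cantor) : Prop :=
  ∃ a b w, Her G a b ∧ x = wcat a w ∧ y = wcat b w

/-- The germ at `w` of the substitution `a ↔ b` is hereditarily in `G`. -/
def Gm (G : Set (Equiv.Perm Cantor)) (a b : Addr) (w : Cantor) : Prop :=
  ∃ n, Her G (a ++ pre w n) (b ++ pre w n)

lemma E.sym {x y : Cantor} (h : E G x y) : E G y x := by
  obtain ⟨a, b, w, h, hx, hy⟩ := h
  exact ⟨b, a, w, h.sym, hy, hx⟩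

lemma E.ne {x y : Cantor} (h : E G x y) : x ≠ y := by
  obtain ⟨a, b, w, h, rfl, rfl⟩ := h
  exact h.tr.1.ne_wcat w w

lemma E.long {x y : Cantor} (h : E G x y) (n : ℕ) : ∃ a b w, Her G a b ∧ x = wcat a w ∧
    y = wcat b w ∧ n ≤ a.length ∧ n ≤ b.length := by
  obtain ⟨a, b, w, h, rfl, rfl⟩ := h
  refine ⟨a ++ pre w n, b ++ pre w n, drp w n, h.append _, ?_, ?_, ?_, ?_⟩ <;> simp

lemma Her.mono {a b : Addr} {w : Cantor} {m n : ℕ} (h : Her G (a ++ pre w m) (b ++ pre w m))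
    (hmn : m ≤ n) : Her G (a ++ pre w n) (b ++ pre w n) := by
  obtain ⟨k, rfl⟩ := Nat.exists_eq_add_of_le hmn
  rw [pre_add, ← List.append_assoc, ← List.append_assoc]
  exact h.append _

lemma Gm.sym {a b : Addr} {w : Cantor} (h : Gm G a b w) : Gm G b a w := by
  obtain ⟨n, h⟩ := h
  exact ⟨n, h.sym⟩

lemma Gm.trans (hG : IsSubgroupSet G) {a b c : Addr} {w : Cantor} (h : Gm G a b w)
    (h' : Gm G b c w) (hne : wcat a w ≠ wcat c w) : Gm G a c w := by
  obtain ⟨l, h⟩ := h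
  obtain ⟨m, h'⟩ := h'
  obtain ⟨n, hn⟩ := exists_incomp_of_ne hne
  refine ⟨l + m + n, (h.mono (by omega)).trans hG (h'.mono (by omega)) ?_⟩
  rw [add_comm, pre_add, ← List.append_assoc, ← List.append_assoc]
  exact hn.both _ _

lemma Her.gm {a b : Addr} (h : Her G a b) (w : Cantor) : Gm G a b w := ⟨0, h.append _⟩

lemma Gm.e {a b : Addr} {w : Cantor} (h : Gm G a b w) : E G (wcat a w) (wcat b w) := by
  obtain ⟨n, h⟩ := h
  exact ⟨_, _, drp w n, h, by simp, by simp⟩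

/-- A germ whose word has been split as `w = zw'` may be shortened accordingly. -/
lemma Gm.of_append {a b z : Addr} {w : Cantor} (h : Gm G (a ++ z) (b ++ z) w) :
    Gm G a b (wcat z w) := by
  obtain ⟨n, h⟩ := h
  refine ⟨z.length + n, ?_⟩
  rw [pre_wcat]
  simpa using h

lemma E.trans (hG : IsSubgroupSet G) {x y z : Cantor} (h : E G x y) (h' : E G y z)
    (hne : x ≠ z) : E G x z := by
  obtain ⟨a, b, w, h, rfl, rfl⟩ := h
  obtain ⟨b', c, v, hbc, hy, rfl, hl, -⟩ := h'.long b.length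
  obtain ⟨t, rfl⟩ := ext_of_mem (wcat_mem b w) (hy ▸ wcat_mem b' v) hl
  rw [wcat_append] at hy
  obtain rfl := wcat_inj _ hy
  rw [← wcat_append] at hne ⊢
  exact (((h.append t).gm v).trans hG (hbc.gm v) hne).e

/-- If the transposition `(c c')` lies in `G` and `cw` is related to a point outside both cones,
then the germ of `(c c')` at `cw` is hereditary. The reason is that conjugation by `(c c')`
affects only one end of the local swap joining the two points. -/
lemma gm_of_e (hG : IsSubgroupSet G) {c c' : Addr} (h : Tr G c c') {x w : Cantor}
    (hx : x ∉ cone c) (hx' : x ∉ cone c') (he : E G x (wcat c w)) : Gm G c c' w := by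
  obtain ⟨a, b, v, hab, rfl, hy, ha, hb⟩ := he.long (c.length + c'.length)
  obtain ⟨z, rfl⟩ := ext_of_mem (wcat_mem c w) (hy ▸ wcat_mem b v) (by omega)
  rw [wcat_append] at hy
  obtain rfl := wcat_inj _ hy
  have hac := incomp_of_not_mem hx (by omega)
  have hac' := incomp_of_not_mem hx' (by omega)
  have h2 : Her G a (c' ++ z) := by
    obtain ⟨_, k, hk, ht⟩ := h
    exact hab.conj hG hk (ht.fixes hac hac') (actsOn.append ht.1 z)
  exact ((hab.sym.trans hG h2 (h.1.both _ _)).gm v).of_append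

/-- Every point is related to another one, since `G` moves any given hereditary pair so that
one of its ends becomes a neighbourhood of the point. -/
lemma exists_e (hG : IsSubgroupSet G) (hGV : G ⊆ VSet) (hsp : SwapPrimitive G) (x : Cantor) :
    ∃ y, E G x y := by
  obtain ⟨a, b, hab⟩ := exists_her hG hsp
  have hne : pre x 1 ≠ [] := by
    intro h
    simpa using congrArg List.length h
  obtain ⟨g, hg, hga⟩ := exists_actsOn hG hsp hab.tr.1.ne_nil hne
  obtain ⟨n, A, B, -, hA, -, -, hAB⟩ := hGV hg
  set w := drp x 1
  obtain ⟨i, hi⟩ := Set.mem_iUnion.1 (hA ▸ Set.mem_univ (wcat b w))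
  have hm : wcat b w ∈ cone (b ++ pre w (A i).length) := ⟨drp w (A i).length, by simp⟩
  obtain ⟨t, ht⟩ := ext_of_mem hi hm (by simp)
  have h2 : actsOn g (b ++ pre w (A i).length) (B i ++ t) := by
    rw [ht]
    exact actsOn.append (hAB i) t
  have := (hab.append (pre w (A i).length)).conj hG hg (hga.append _) h2
  refine ⟨_, _, _, drp w (A i).length, this, ?_, rfl⟩
  simp [w]

/-- Classes of `E` are dense: if a cone misses or contains a class, then so does every cone
swapped with it by a transposition in `G`, whereas small neighbourhoods of `x` do neither. -/
lemma dense (hG : IsSubgroupSet G) (hGV : G ⊆ VSet) (hsp : SwapPrimitive G) (x : Cantor)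
    {e : Addr} (he : e ≠ []) : ∃ y ∈ cone e, y = x ∨ E G x y := by
  by_contra! hno
  obtain ⟨x', hx'⟩ := exists_e hG hGV hsp x
  obtain ⟨n, hn⟩ := exists_sep hx'.ne
  have hne : pre x n ≠ [] := by
    intro h
    rw [h, cone_nil] at hn
    exact hn (Set.mem_univ _)
  have key := (hsp e (pre x n) he hne).induct
    (Q := fun d => (∀ y, (y = x ∨ E G x y) → y ∉ cone d) ∨ ∀ y, (y = x ∨ E G x y) → y ∈ cone d)
    ?_ (.inl fun y hy hye => by
      rcases hy with rfl | hy
      · exact (hno y hye).1 rfl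
      · exact (hno y hye).2 hy)
  · rcases key with h | h
    · exact h x (.inl rfl) (mem_cone_pre x n)
    · exact hn (h x' (.inr hx'))
  rintro c c' hcc - (h | h)
  · by_contra! hmix
    obtain ⟨⟨y, hy, hyc⟩, z, hz, hzc⟩ := hmix
    obtain ⟨w, rfl⟩ := hyc
    have cls : ∀ p q, (p = x ∨ E G x p) → (q = x ∨ E G x q) → p ≠ q → E G p q := by
      rintro p q (rfl | hp) (rfl | hq) hpq
      · exact absurd rfl hpq
      · exact hq
      · exact hp.sym
      · exact hp.sym.trans hG hq hpq
    have hzy : E G z (wcat c' w) := cls _ _ hz hy (fun h => hzc (h ▸ wcat_mem _ _))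
    have h1 := (gm_of_e hG hcc.sym hzc (h z hz) hzy).e
    refine h (wcat c w) ?_ (wcat_mem _ _)
    rcases hy with hy | hy
    · exact .inr (hy ▸ h1)
    · by_cases hx : wcat c w = x
      · exact .inl hx
      · exact .inr (hy.trans hG h1 (Ne.symm hx))
  · exact .inl fun y hy hyc => Set.disjoint_left.1 hcc.1 (h y hy) hyc

lemma tr_of_gm (hG : IsSubgroupSet G) {a b : Addr} (hab : Incomp a b)
    (h : ∀ w, Gm G a b w) : Tr G a b := by
  have := konig (P := fun z => Tr G (a ++ z) (b ++ z)) ?_ ?_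
  · simpa using this
  · intro z h0 h1
    exact Tr.merge hG (by simpa using h0) (by simpa using h1) (hab.both _ _)
  · intro w
    obtain ⟨n, hn⟩ := h w
    exact ⟨n, hn.tr⟩

lemma her_of_gm (hG : IsSubgroupSet G) {a b : Addr} (hab : Incomp a b)
    (h : ∀ w, Gm G a b w) : Her G a b := by
  intro u
  refine tr_of_gm hG (hab.both _ _) fun w => ?_
  obtain ⟨n, hn⟩ := h (wcat u w)
  refine ⟨n, ?_⟩
  have := hn.mono (n := u.length + n) (by omega)
  rw [pre_wcat] at this
  simpa using this

/-- Every small transposition of `G` is hereditary. -/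
lemma her_of_tr (hG : IsSubgroupSet G) (hGV : G ⊆ VSet) (hsp : SwapPrimitive G) {c c' : Addr}
    (h : Tr G c c') (hs : SmallPair c c') : Her G c c' := by
  refine her_of_gm hG h.1 fun w => ?_
  obtain ⟨x, hx⟩ := (Set.ne_univ_iff_exists_notMem _).1 hs
  rw [Set.mem_union, not_or] at hx
  set N := c.length + c'.length
  have hd : ∀ e : Addr, e.length ≤ N → x ∉ cone e → Incomp (pre x N) e := by
    intro e he hxe
    exact incomp_of_not_mem (w := drp x N) (by rwa [wcat_pre]) (by simpa using he)
  have h1 := hd c (by omega) hx.1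
  have h2 := hd c' (by omega) hx.2
  obtain ⟨y, hy, hE⟩ := dense hG hGV hsp (wcat c w) h1.ne_nil
  have hyc := Set.disjoint_left.1 h1 hy
  have hyc' := Set.disjoint_left.1 h2 hy
  rcases hE with rfl | hE
  · exact absurd (wcat_mem _ _) hyc
  · exact gm_of_e hG h hyc hyc' hE.sym

lemma exists_pre_avoiding (s : Set Cantor) (hs : s.Finite) :
    ∃ e : Addr, e ≠ [] ∧ ∀ y ∈ s, y ∉ cone e := by
  obtain ⟨p, hp⟩ := hs.exists_notMem
  have : ∀ y : Cantor, ∃ n, y ∈ s → y ∉ cone (pre p n) := by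
    intro y
    by_cases hy : y ∈ s
    · obtain ⟨n, hn⟩ := exists_sep (x := p) (y := y) (fun h => hp (h ▸ hy))
      exact ⟨n, fun _ => hn⟩
    · exact ⟨0, fun h => absurd h hy⟩
  choose N hN using this
  obtain ⟨M, hM⟩ := (hs.image N).bddAbove
  refine ⟨pre p (M + 1), fun h => by simpa using congrArg List.length h, fun y hy hm => ?_⟩
  have hle : N y ≤ M := hM ⟨y, hy, rfl⟩
  obtain ⟨k, hk⟩ := Nat.exists_eq_add_of_le (show N y ≤ M + 1 by omega)
  rw [hk, pre_add] at hm
  exact hN y hy (cone_append _ _ hm)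

/-- `G` contains all transpositions. The germ of `(a b)` at `w` is obtained by following the
point `aw` along a chain `cᵢ` from `a` to `b`. An auxiliary point of its class, distinct from
all the `cᵢw`, makes all the compositions of germs legitimate. -/
lemma tr_of_incomp (hG : IsSubgroupSet G) (hGV : G ⊆ VSet) (hsp : SwapPrimitive G) {a b : Addr}
    (hab : Incomp a b) : Tr G a b := by
  refine tr_of_gm hG hab fun w => ?_
  obtain ⟨n, c, hca, hcb, hc⟩ := hsp a b hab.ne_nil hab.sym.ne_nil
  obtain ⟨e, he, hav⟩ := exists_pre_avoiding _
    ((Set.finite_Iic n).image fun i => wcat (c i) w)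
  obtain ⟨y, hy, hE⟩ := dense hG hGV hsp (wcat a w) he
  have hya : y ≠ wcat a w := by
    rintro rfl
    exact hav _ ⟨0, Nat.zero_le n, by simp [hca]⟩ hy
  obtain ⟨d, b', v, hdb, rfl, hx, -, hl⟩ := (hE.resolve_left hya).sym.long a.length
  obtain ⟨z, rfl⟩ := ext_of_mem (wcat_mem a w) (hx ▸ wcat_mem b' v) hl
  rw [wcat_append] at hx
  obtain rfl := wcat_inj _ hx
  have key : ∀ i, i ≤ n → Gm G d (c i ++ z) v := by
    intro i
    induction i with
    | zero => exact fun _ => by rw [hca]; exact hdb.gm v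
    | succ i ih =>
      intro hi
      obtain ⟨h1, h2, h3⟩ := hc i (by omega)
      refine (ih (by omega)).trans hG
        (((her_of_tr hG hGV hsp ⟨h1, h3⟩ h2).append z).gm v) fun heq => ?_
      exact hav _ ⟨i + 1, hi, rfl⟩ (by simpa [heq] using hy)
  have hend := key n le_rfl
  rw [hcb] at hend
  exact ((hdb.gm v).sym.trans hG hend ((hab.both _ _).ne_wcat _ _)).of_append

end

/-! ### Transpositions generate Thompson's group -/

section
variable {G : Set (Equiv.Perm Cantor)}

/-- The cones of the addresses in `S` partition Cantor space. -/
def ConePartition (S : Finset Addr) : Prop :=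
  (∀ a ∈ S, ∀ b ∈ S, a ≠ b → Incomp a b) ∧ ∀ x, ∃ a ∈ S, x ∈ cone a

/-- A partition other than the trivial one contains two sibling cones: a longest address and
its sibling. -/
lemma ConePartition.exists_caret {S : Finset Addr} (h : ConePartition S) (hS : ∃ a ∈ S, a ≠ []) :
    ∃ α, α ++ [false] ∈ S ∧ α ++ [true] ∈ S := by
  obtain ⟨a₀, ha₀, hne⟩ := hS
  obtain ⟨a, ha, hmax⟩ := S.exists_max_image List.length ⟨a₀, ha₀⟩
  have hane : a ≠ [] := by
    rintro rfl
    have := hmax a₀ ha₀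
    simp at this
    exact hne this
  rcases List.eq_nil_or_concat a with rfl | ⟨α, t, rfl⟩
  · exact absurd rfl hane
  suffices hs : α ++ [!t] ∈ S by
    refine ⟨α, ?_⟩
    cases t <;> simp_all
  obtain ⟨b, hb, hxb⟩ := h.2 (wcat (α ++ [!t]) fun _ => false)
  obtain ⟨r, hr⟩ := ext_of_mem hxb (wcat_mem _ _) (by simpa using hmax b hb)
  rcases List.eq_nil_or_concat r with rfl | ⟨r', s, rfl⟩
  · simpa [hr] using hb
  exfalso
  rw [List.concat_eq_append, ← List.append_assoc] at hr
  obtain ⟨rfl, -⟩ := List.append_inj' hr rfl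
  rw [List.concat_eq_append] at ha
  refine not_incomp_append b (r' ++ [t]) ?_
  rw [← List.append_assoc]
  refine h.1 _ hb _ ha fun heq => ?_
  have := congrArg List.length heq
  simp at this

lemma ConePartition.map {S : Finset Addr} (h : ConePartition S) {g : Equiv.Perm Cantor} {f : Addr → Addr}
    (hf : ∀ a ∈ S, actsOn g a (f a)) : ConePartition (S.image f) := by
  constructor
  · intro a ha b hb hab
    obtain ⟨a, ha', rfl⟩ := Finset.mem_image.1 ha
    obtain ⟨b, hb', rfl⟩ := Finset.mem_image.1 hb
    exact (h.1 a ha' b hb' (fun e => hab (e ▸ rfl))).map (hf a ha') (hf b hb')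
  · intro x
    obtain ⟨a, ha, w, hw⟩ := h.2 (g.symm x)
    refine ⟨f a, Finset.mem_image_of_mem f ha, w, ?_⟩
    rw [← hf a ha, hw]; simp

lemma ConePartition.merge {S : Finset Addr} (h : ConePartition S) {α : Addr} (h0 : α ++ [false] ∈ S)
    (h1 : α ++ [true] ∈ S) :
    ConePartition (insert α ((S.erase (α ++ [false])).erase (α ++ [true]))) := by
  have key : ∀ b ∈ (S.erase (α ++ [false])).erase (α ++ [true]), Incomp α b := by
    intro b hb
    simp only [Finset.mem_erase] at hb
    rw [Incomp, Set.disjoint_left]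
    intro x hx hxb
    rcases mem_child hx with hx | hx
    · exact Set.disjoint_left.1 (h.1 _ h0 _ hb.2.2 (Ne.symm hb.2.1)) hx hxb
    · exact Set.disjoint_left.1 (h.1 _ h1 _ hb.2.2 (Ne.symm hb.1)) hx hxb
  constructor
  · intro a ha b hb hab
    rcases Finset.mem_insert.1 ha with rfl | ha <;> rcases Finset.mem_insert.1 hb with rfl | hb
    · exact absurd rfl hab
    · exact key b hb
    · exact (key a ha).sym
    · simp only [Finset.mem_erase] at ha hb
      exact h.1 _ ha.2.2 _ hb.2.2 hab
  · intro x
    obtain ⟨a, ha, hx⟩ := h.2 x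
    by_cases e0 : a = α ++ [false]
    · exact ⟨α, by simp, cone_append _ _ (e0 ▸ hx)⟩
    by_cases e1 : a = α ++ [true]
    · exact ⟨α, by simp, cone_append _ _ (e1 ▸ hx)⟩
    exact ⟨a, by simp [e0, e1, ha], hx⟩

/-- Composing with a transposition of `G` interchanges the images of two cones `p`, `q` of the
partition. -/
lemma exists_mul_swap (hG : IsSubgroupSet G) (hT : ∀ a b, Incomp a b → Tr G a b)
    {S : Finset Addr} (h : ConePartition S) {g : Equiv.Perm Cantor} {f : Addr → Addr}
    (hf : ∀ a ∈ S, actsOn g a (f a)) {p q : Addr} (hp : p ∈ S) (hq : q ∈ S) :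
    ∃ k ∈ G, ∀ a ∈ S, actsOn (k * g) a (f (Equiv.swap p q a)) := by
  have hinc : ∀ a ∈ S, ∀ b ∈ S, a ≠ b → Incomp (f a) (f b) := fun a ha b hb hab =>
    (h.1 a ha b hb hab).map (hf a ha) (hf b hb)
  by_cases hpq : p = q
  · subst hpq
    exact ⟨1, hG.1, by simpa using hf⟩
  obtain ⟨-, k, hk, ht⟩ := hT _ _ (hinc p hp q hq hpq)
  refine ⟨k, hk, fun a ha w => ?_⟩
  rw [Equiv.Perm.mul_apply, hf a ha]
  by_cases hap : a = p
  · subst hap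
    rw [Equiv.swap_apply_left, ht.1]
  by_cases haq : a = q
  · subst haq
    rw [Equiv.swap_apply_right, ht.2.1]
  rw [Equiv.swap_apply_of_ne_of_ne hap haq]
  exact ht.fixes (hinc a ha p hp hap) (hinc a ha q hq haq) w

/-- Induction on the size of the partition: after composing with transpositions, the element
maps a pair of siblings to a pair of siblings, and both pairs can be merged. -/
lemma mem_of_part (hG : IsSubgroupSet G) (hT : ∀ a b, Incomp a b → Tr G a b) (n : ℕ) :
    ∀ (S : Finset Addr) (g : Equiv.Perm Cantor) (f : Addr → Addr), S.card ≤ n → ConePartition S →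
      (∀ a ∈ S, actsOn g a (f a)) → g ∈ G := by
  induction n with
  | zero =>
    intro S g f hS h _
    obtain ⟨a, ha, -⟩ := h.2 fun _ => false
    rw [Finset.card_eq_zero.1 (Nat.le_zero.1 hS)] at ha
    simp at ha
  | succ n ih =>
    intro S g f hS h hf
    by_cases hne : ∃ b ∈ S.image f, b ≠ []
    · obtain ⟨β, hβ0, hβ1⟩ := (h.map hf).exists_caret hne
      obtain ⟨p, hp, hpβ⟩ := Finset.mem_image.1 hβ0
      obtain ⟨q, hq, hqβ⟩ := Finset.mem_image.1 hβ1
      have hpq : p ≠ q := by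
        rintro rfl
        rw [hpβ] at hqβ
        simp at hqβ
      have hne' : ∃ a ∈ S, a ≠ [] := by
        by_contra! hall
        exact hpq ((hall p hp).trans (hall q hq).symm)
      obtain ⟨α, hα0, hα1⟩ := h.exists_caret hne'
      obtain ⟨k, hk, hk'⟩ := exists_mul_swap hG hT h hf hα0 hp
      set q' := Equiv.swap (α ++ [false]) p q with hq'
      have hq'S : q' ∈ S := by
        rw [hq', Equiv.swap_apply_def]
        split_ifs <;> assumption
      obtain ⟨l, hl, hl'⟩ := exists_mul_swap hG hT h (f := fun a => f (Equiv.swap (α ++ [false]) p a))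
        hk' hα1 hq'S
      have e1 := hl' _ hα1
      rw [Equiv.swap_apply_left, hq', Equiv.swap_apply_self, hqβ] at e1
      have e0 := hl' _ hα0
      have hsw : Equiv.swap (α ++ [true]) q' (α ++ [false]) = α ++ [false] := by
        refine Equiv.swap_apply_of_ne_of_ne (by simp) ?_
        intro he
        rw [hq', eq_comm, Equiv.swap_apply_eq_iff, Equiv.swap_apply_left] at he
        exact hpq he.symm
      rw [hsw, Equiv.swap_apply_left, hpβ] at e0
      have hmem : l * (k * g) ∈ G := by
        refine ih (insert α ((S.erase (α ++ [false])).erase (α ++ [true]))) _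
          (Function.update
            (fun a => f (Equiv.swap (α ++ [false]) p (Equiv.swap (α ++ [true]) q' a))) α β)
          ?_ (h.merge hα0 hα1) ?_
        · have c1 := Finset.card_erase_of_mem hα0
          have c2 := Finset.card_erase_of_mem
            (Finset.mem_erase.2 ⟨by simp, hα1⟩ : α ++ [true] ∈ S.erase (α ++ [false]))
          have c3 := Finset.card_insert_le α ((S.erase (α ++ [false])).erase (α ++ [true]))
          have c4 : 0 < (S.erase (α ++ [false])).card :=
            Finset.card_pos.2 ⟨_, Finset.mem_erase.2 ⟨by simp, hα1⟩⟩
          omega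
        · intro a ha
          by_cases haα : a = α
          · subst haα
            rw [Function.update_self]
            intro w
            have h1 : w = wcat [w 0] (drp w 1) := by
              conv_lhs => rw [← wcat_pre w 1]
              rfl
            rw [h1]
            cases w 0
            · simpa using e0 (drp w 1)
            · simpa using e1 (drp w 1)
          · rw [Function.update_of_ne haα]
            have ha' := (Finset.mem_insert.1 ha).resolve_left haα
            exact hl' a (Finset.mem_of_mem_erase (Finset.mem_of_mem_erase ha'))
      have := hG.2.1 _ (hG.2.2 _ (hG.2.1 _ hl _ hk)) _ hmem
      simpa [mul_assoc] using this
    · push Not at hne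
      have hfa : ∀ a ∈ S, f a = [] := fun a ha => hne _ (Finset.mem_image_of_mem f ha)
      -- The images of distinct elements are incomparable, so `S` is the trivial partition.
      have hS1 : ∀ a ∈ S, a = [] := by
        by_contra! hc
        obtain ⟨α, h0, h1⟩ := h.exists_caret hc
        have := (h.1 _ h0 _ h1 (by simp)).map (hf _ h0) (hf _ h1)
        rw [hfa _ h0, hfa _ h1] at this
        exact not_incomp_append [] [] this
      have hg1 : g = 1 := by
        ext1 x
        obtain ⟨a, ha, w, rfl⟩ := h.2 x
        rw [hf a ha, hfa a ha, hS1 a ha]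
        rfl
      rw [hg1]
      exact hG.1

end


/-- **Statement 19.**  A swap-primitive subgroup of Thompson's group `V` is all of
`V`. -/
theorem eq_V_of_swapPrimitive (G : Set (Equiv.Perm Cantor))
    (hG : IsSubgroupSet G) (hGV : G ⊆ VSet) (hsp : SwapPrimitive G) :
    G = VSet := by
  refine hGV.antisymm ?_
  rintro g ⟨n, A, B, hA, hAu, -, -, hAB⟩
  have hinj : Function.Injective A := by
    intro i j hij
    by_contra hne
    have h := hA i j hne
    rw [hij] at h
    exact not_incomp_append (A j) [] (by rw [List.append_nil]; exact h)
  -- `f` sends `A i` to `B i`; its other values are irrelevant.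
  let f : Addr → Addr := Function.extend A B fun _ => []
  refine mem_of_part hG (fun a b h => tr_of_incomp hG hGV hsp h) _
    (Finset.univ.image A) g f le_rfl ⟨?_, ?_⟩ ?_
  · simp only [Finset.mem_image, Finset.mem_univ, true_and]
    rintro _ ⟨i, rfl⟩ _ ⟨j, rfl⟩ hne
    exact hA i j fun h => hne (h ▸ rfl)
  · intro x
    obtain ⟨i, hi⟩ := Set.mem_iUnion.1 (hAu ▸ Set.mem_univ x)
    exact ⟨A i, by simp, hi⟩
  · simp only [Finset.mem_image, Finset.mem_univ, true_and]
    rintro _ ⟨i, rfl⟩ w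
    rw [hAB, show f (A i) = B i from hinj.extend_apply _ _ _]
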